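/- arXiv:1108.1647 — 4 statements merged into one kernel-verified Lean document; each statement's English description precedes it below -/
import Mathlib

section
/- For every real number η with |η| ≤ e²/4, the function f_η(x₁,x₂) = (2π)^{-1} e^{-(x₁²+x₂²)/2} [1 + η (x₁³x₂ − x₂³x₁) e^{-(x₁²+x₂²)/2}] is a probability density function on ℝ²: f_η(x₁,x₂) ≥ 0 for all (x₁,x₂) and ∫_{ℝ²} f_η(x₁,x₂) dx₁ dx₂ = 1. -/
open MeasureTheory Real

/-- For |η| ≤ e²/4, f_η(x₁,x₂) = (2π)⁻¹ e^{-(x₁²+x₂²)/2}[1 + η(x₁³x₂ − x₂³x₁)e^{-(x₁²+x₂²)/2}]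
is a probability density on ℝ². -/
theorem stmt_14 (η : ℝ) (hη : |η| ≤ Real.exp 2 / 4) :
    (∀ x : ℝ × ℝ, 0 ≤ (2*π)⁻¹ * Real.exp (-(x.1^2 + x.2^2) / 2) *
      (1 + η * (x.1^3 * x.2 - x.2^3 * x.1) * Real.exp (-(x.1^2 + x.2^2) / 2))) ∧
    (∫ x : ℝ × ℝ, (2*π)⁻¹ * Real.exp (-(x.1^2 + x.2^2) / 2) *
      (1 + η * (x.1^3 * x.2 - x.2^3 * x.1) * Real.exp (-(x.1^2 + x.2^2) / 2))) = 1 := by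
  constructor
  · rintro ⟨x, y⟩
    simp only
    apply mul_nonneg (by positivity)
    have h1 : |x^3*y - y^3*x| ≤ (x^2+y^2)^2/4 := by
      rw [abs_le]
      constructor
      · nlinarith [sq_nonneg (x^2 - y^2 + 2*x*y)]
      · nlinarith [sq_nonneg (x^2 - y^2 - 2*x*y)]
    have h2 : (x^2+y^2)/4 ≤ Real.exp ((x^2+y^2)/4 - 1) := by
      linarith [Real.add_one_le_exp ((x^2+y^2)/4 - 1)]
    have h3 : ((x^2+y^2)/4)^2 ≤ Real.exp ((x^2+y^2)/2 - 2) := by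
      calc _ ≤ (Real.exp ((x^2+y^2)/4 - 1))^2 := by gcongr
        _ = _ := by rw [← Real.exp_nat_mul]; congr 1; push_cast; ring
    have h4 : |η * (x^3*y - y^3*x) * Real.exp (-(x^2+y^2)/2)| ≤ 1 := by
      rw [abs_mul, abs_mul, abs_of_pos (Real.exp_pos _)]
      calc _ ≤ Real.exp 2 / 4 * (4 * Real.exp ((x^2+y^2)/2 - 2)) * Real.exp (-(x^2+y^2)/2) := by
            gcongr
            linarith
        _ = Real.exp 2 * Real.exp ((x^2+y^2)/2 - 2) * Real.exp (-(x^2+y^2)/2) := by ring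
        _ = 1 := by
            rw [← Real.exp_add, ← Real.exp_add, Real.exp_eq_one_iff]; ring
    linarith [(abs_le.1 h4).1]
  · have ig : Integrable (fun x : ℝ => Real.exp (-(1/2) * x^2)) :=
      integrable_exp_neg_mul_sq (by norm_num)
    have ia : Integrable (fun x : ℝ => x^3 * Real.exp (-1 * x^2)) := by
      have := integrable_rpow_mul_exp_neg_mul_sq (b := 1) one_pos (s := ((3:ℕ):ℝ)) (by norm_num)
      simpa only [Real.rpow_natCast] using this
    have ib : Integrable (fun x : ℝ => x * Real.exp (-1 * x^2)) :=
      integrable_mul_exp_neg_mul_sq one_pos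
    have e : ∀ x : ℝ × ℝ, (2*π)⁻¹ * Real.exp (-(x.1^2 + x.2^2) / 2) *
      (1 + η * (x.1^3 * x.2 - x.2^3 * x.1) * Real.exp (-(x.1^2 + x.2^2) / 2)) =
      (2*π)⁻¹ * (Real.exp (-(1/2) * x.1^2) * Real.exp (-(1/2) * x.2^2)) +
      (2*π)⁻¹ * η * ((x.1^3 * Real.exp (-1 * x.1^2)) * (x.2 * Real.exp (-1 * x.2^2))
        - (x.1 * Real.exp (-1 * x.1^2)) * (x.2^3 * Real.exp (-1 * x.2^2))) := by
      rintro ⟨x, y⟩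
      simp only
      have e1 : Real.exp (-(x^2+y^2)/2) = Real.exp (-(1/2) * x^2) * Real.exp (-(1/2) * y^2) := by
        rw [← Real.exp_add]; congr 1; ring
      have e2 : ∀ t : ℝ, Real.exp (-1 * t^2) = Real.exp (-(1/2) * t^2) * Real.exp (-(1/2) * t^2) := by
        intro t; rw [← Real.exp_add]; congr 1; ring
      rw [e1, e2, e2]; ring
    simp_rw [e]
    have i1 := ig.mul_prod ig
    have i2 := ia.mul_prod ib
    have i3 := ib.mul_prod ia
    rw [Measure.volume_eq_prod]
    rw [integral_add (i1.const_mul _) (by exact (i2.sub i3).const_mul _), integral_const_mul,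
      integral_const_mul, integral_sub i2 i3,
      integral_prod_mul (fun x : ℝ => Real.exp (-(1/2) * x^2)) (fun x : ℝ => Real.exp (-(1/2) * x^2)),
      integral_prod_mul (fun x : ℝ => x^3 * Real.exp (-1 * x^2)) (fun x : ℝ => x * Real.exp (-1 * x^2)),
      integral_prod_mul (fun x : ℝ => x * Real.exp (-1 * x^2)) (fun x : ℝ => x^3 * Real.exp (-1 * x^2)),
      integral_gaussian, Real.mul_self_sqrt (by positivity)]
    have := Real.pi_ne_zero
    field_simp
    ring
end

section
/- Let |η| ≤ e²/4 and let μ_η be the probability measure on ℝ² with density f_η(x₁,x₂) = (2π)^{-1} e^{-(x₁²+x₂²)/2} [1 + η (x₁³x₂ − x₂³x₁) e^{-(x₁²+x₂²)/2}]. Then for every angle θ, the pushforward of μ_η under the map (x₁,x₂) ↦ x₁ sin θ + x₂ cos θ has probability density g_θ(x) = (2π)^{-1/2} e^{-x²/2} [1 − (√2 η sin(4θ)/32)(4x⁴ − 12x² + 3) e^{-x²/2}] on ℝ. -/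
open MeasureTheory Real

/-- The bivariate perturbed Gaussian density. -/
noncomputable def fEta (η : ℝ) (x : ℝ × ℝ) : ℝ :=
  (2*π)⁻¹ * Real.exp (-(x.1^2 + x.2^2) / 2) *
    (1 + η * (x.1^3 * x.2 - x.2^3 * x.1) * Real.exp (-(x.1^2 + x.2^2) / 2))

lemma aux_int (n : ℕ) : Integrable (fun v : ℝ => v^n * Real.exp (-v^2)) := by
  have h := integrable_rpow_mul_exp_neg_mul_sq (b := 1) one_pos (s := n)
    (by have : (0:ℝ) ≤ n := Nat.cast_nonneg n
        linarith)
  simpa [Real.rpow_natCast] using h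

lemma aux_deriv (n : ℕ) (v : ℝ) : HasDerivAt (fun v : ℝ => v^n * Real.exp (-v^2))
    (n * v^(n-1) * Real.exp (-v^2) - 2 * (v^(n+1) * Real.exp (-v^2))) v := by
  have h1 := hasDerivAt_pow n v
  have h2 := ((hasDerivAt_pow 2 v).neg).exp
  have := h1.mul h2
  refine this.congr_deriv ?_
  simp
  ring

lemma aux_rec (n : ℕ) : (n:ℝ) * ∫ v : ℝ, v^(n-1) * Real.exp (-v^2)
    = 2 * ∫ v : ℝ, v^(n+1) * Real.exp (-v^2) := by
  have i1 := (aux_int (n-1)).const_mul (n:ℝ)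
  have i2 := (aux_int (n+1)).const_mul 2
  have h := integral_eq_zero_of_hasDerivAt_of_integrable (aux_deriv n)
    (by simpa only [mul_assoc, Pi.sub_def] using i1.sub i2) (aux_int n)
  simp only [mul_assoc] at h
  rw [integral_sub i1 i2, integral_const_mul, integral_const_mul] at h
  linarith

lemma aux0 : ∫ v : ℝ, v^0 * Real.exp (-v^2) = √π := by
  have := integral_gaussian 1
  simpa using this

lemma aux1 : ∫ v : ℝ, v^1 * Real.exp (-v^2) = 0 := by
  have := aux_rec 0
  simp only [Nat.cast_zero, zero_mul, zero_add] at this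
  linarith

lemma aux2 : ∫ v : ℝ, v^2 * Real.exp (-v^2) = √π / 2 := by
  have := aux_rec 1
  simp only [Nat.cast_one, Nat.sub_self, Nat.reduceAdd, aux0] at this
  linarith

lemma aux3 : ∫ v : ℝ, v^3 * Real.exp (-v^2) = 0 := by
  have := aux_rec 2
  simp only [Nat.cast_ofNat, Nat.reduceSub, Nat.reduceAdd, aux1] at this
  linarith

lemma aux4 : ∫ v : ℝ, v^4 * Real.exp (-v^2) = 3 * √π / 4 := by
  have := aux_rec 3
  simp only [Nat.cast_ofNat, Nat.reduceSub, Nat.reduceAdd, aux2] at this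
  linarith

lemma fEta_nonneg (η : ℝ) (hη : |η| ≤ Real.exp 2 / 4) (x : ℝ × ℝ) : 0 ≤ fEta η x := by
  obtain ⟨a, b⟩ := x
  unfold fEta
  refine mul_nonneg (by positivity) ?_
  simp only
  set t := (a^2+b^2)/4 with ht
  have e1 : -(a^2+b^2)/2 = -(2*t) := by rw [ht]; ring
  rw [e1]
  have ht0 : 0 ≤ t := by positivity
  have hp : |a^3*b - b^3*a| ≤ 4 * t^2 := by
    rw [abs_le]
    constructor <;> rw [ht]
    · nlinarith [sq_nonneg (a^2 - b^2 + 2*a*b)]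
    · nlinarith [sq_nonneg (a^2 - b^2 - 2*a*b)]
  have hk : t * Real.exp 1 ≤ Real.exp t := by
    have := Real.add_one_le_exp (t-1)
    have h2 : Real.exp t = Real.exp (t-1) * Real.exp 1 := by rw [← Real.exp_add]; ring_nf
    rw [h2]
    exact mul_le_mul_of_nonneg_right (by linarith) (Real.exp_pos _).le
  have hk2 : t^2 * Real.exp 2 ≤ Real.exp (2*t) := by
    have h3 : Real.exp 2 = Real.exp 1 ^ 2 := by rw [← Real.exp_nat_mul]; norm_num
    have h4 : Real.exp (2*t) = Real.exp t ^ 2 := by rw [← Real.exp_nat_mul]; norm_num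
    rw [h3, h4, ← mul_pow]
    exact pow_le_pow_left₀ (by positivity) hk 2
  have : |η * (a^3*b - b^3*a) * Real.exp (-(2*t))| ≤ 1 := by
    rw [abs_mul, abs_mul, abs_of_pos (Real.exp_pos _), Real.exp_neg, ← div_eq_mul_inv,
      div_le_one (Real.exp_pos _)]
    calc |η| * |a^3*b - b^3*a| ≤ Real.exp 2 / 4 * (4 * t^2) := by gcongr
      _ = t^2 * Real.exp 2 := by ring
      _ ≤ _ := hk2
  linarith [neg_abs_le (η * (a^3*b - b^3*a) * Real.exp (-(2*t)))]

/-- reflection -/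
noncomputable def aT (θ : ℝ) : (ℝ × ℝ) →ₗ[ℝ] (ℝ × ℝ) where
  toFun p := (p.1 * Real.sin θ + p.2 * Real.cos θ, p.1 * Real.cos θ - p.2 * Real.sin θ)
  map_add' x y := by ext <;> simp <;> ring
  map_smul' x y := by ext <;> simp <;> ring

lemma aT_invol (θ : ℝ) : aT θ ∘ₗ aT θ = LinearMap.id := by
  have := Real.sin_sq_add_cos_sq θ
  refine LinearMap.ext fun x => Prod.ext ?_ ?_
  · simp [aT]; linear_combination x.1 * this
  · simp [aT]; linear_combination x.2 * this

lemma aT_mp (θ : ℝ) : MeasurePreserving (aT θ) (volume : Measure (ℝ × ℝ)) volume := by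
  have hd : LinearMap.det (aT θ) * LinearMap.det (aT θ) = 1 := by
    rw [← LinearMap.det_comp, aT_invol, LinearMap.det_id]
  have hne : LinearMap.det (aT θ) ≠ 0 := by
    intro h; simp [h] at hd
  have habs : |LinearMap.det (aT θ)| = 1 := by
    rcases mul_self_eq_one_iff.1 hd with h | h <;> simp [h]
  refine ⟨(aT θ).continuous_of_finiteDimensional.measurable, ?_⟩
  rw [Measure.map_linearMap_addHaar_eq_smul_addHaar _ hne, abs_inv, habs]
  simp

lemma aT_emb (θ : ℝ) : MeasurableEmbedding (aT θ) := by
  have hm : Measurable (aT θ) := (aT θ).continuous_of_finiteDimensional.measurable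
  have hi : ∀ x, aT θ (aT θ x) = x := fun x => LinearMap.congr_fun (aT_invol θ) x
  exact (MeasurableEquiv.mk ⟨aT θ, aT θ, hi, hi⟩ hm hm).measurableEmbedding

lemma fEta_aT (η θ u v : ℝ) : fEta η (aT θ (u, v)) =
    (2*π)⁻¹ * Real.exp (-u^2/2) * Real.exp (-(1/2) * v^2) +
    (2*π)⁻¹ * η * Real.exp (-u^2) * (
      Real.cos (4*θ) * u * (v^3 * Real.exp (-v^2)) - Real.cos (4*θ) * u^3 * (v^1 * Real.exp (-v^2))
      - Real.sin (4*θ) / 4 * (v^4 * Real.exp (-v^2))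
      + 6 * Real.sin (4*θ) / 4 * u^2 * (v^2 * Real.exp (-v^2))
      - Real.sin (4*θ) / 4 * u^4 * (v^0 * Real.exp (-v^2))) := by
  have hsc := Real.sin_sq_add_cos_sq θ
  have hs4 : Real.sin (4*θ) = 4 * Real.sin θ * Real.cos θ * (Real.cos θ^2 - Real.sin θ^2) := by
    rw [show 4*θ = 2*(2*θ) by ring, Real.sin_two_mul, Real.sin_two_mul, Real.cos_two_mul']; ring
  have hc4 : Real.cos (4*θ) = (Real.cos θ^2 - Real.sin θ^2)^2
      - (2 * Real.sin θ * Real.cos θ)^2 := by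
    rw [show 4*θ = 2*(2*θ) by ring, Real.cos_two_mul', Real.sin_two_mul, Real.cos_two_mul']
  have hE : Real.exp (-((aT θ (u,v)).1^2 + (aT θ (u,v)).2^2) / 2)
      = Real.exp (-u^2/2) * Real.exp (-(1/2) * v^2) := by
    rw [← Real.exp_add]
    congr 1
    simp only [aT, LinearMap.coe_mk, AddHom.coe_mk]
    linear_combination (-(u^2+v^2)/2) * hsc
  have hu : Real.exp (-u^2) = Real.exp (-u^2/2) ^ 2 := by
    rw [← Real.exp_nat_mul]; congr 1; push_cast; ring
  have hv : Real.exp (-v^2) = Real.exp (-(1/2) * v^2) ^ 2 := by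
    rw [← Real.exp_nat_mul]; congr 1; push_cast; ring
  unfold fEta
  rw [hE, hu, hv, hs4, hc4]
  simp only [aT, LinearMap.coe_mk, AddHom.coe_mk]
  ring

lemma key (η θ u : ℝ) : Integrable (fun v : ℝ => fEta η (aT θ (u, v))) ∧
    ∫ v : ℝ, fEta η (aT θ (u, v)) = (2*π)^(-(1:ℝ)/2) * Real.exp (-u^2/2) *
            (1 - (Real.sqrt 2 * η * Real.sin (4*θ) / 32) * (4*u^4 - 12*u^2 + 3) *
              Real.exp (-u^2/2)) := by
  simp only [fEta_aT]
  have ig : Integrable (fun v : ℝ => Real.exp (-(1/2) * v^2)) :=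
    integrable_exp_neg_mul_sq (by norm_num)
  have j0 := ig.const_mul ((2*π)⁻¹ * Real.exp (-u^2/2))
  have k3 := (aux_int 3).const_mul (Real.cos (4*θ) * u)
  have k1 := (aux_int 1).const_mul (Real.cos (4*θ) * u^3)
  have k4 := (aux_int 4).const_mul (Real.sin (4*θ) / 4)
  have k2 := (aux_int 2).const_mul (6 * Real.sin (4*θ) / 4 * u^2)
  have k0 := (aux_int 0).const_mul (Real.sin (4*θ) / 4 * u^4)
  have j1 := ((((k3.sub k1).sub k4).add k2).sub k0).const_mul ((2*π)⁻¹ * η * Real.exp (-u^2))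
  refine ⟨j0.add j1, ?_⟩
  have hpi := Real.pi_pos
  have e : (2*π)^(-(1:ℝ)/2) = (√2 * √π)⁻¹ := by
    rw [neg_div, Real.rpow_neg (by positivity), ← Real.sqrt_eq_rpow, Real.sqrt_mul (by norm_num)]
  have hu : Real.exp (-u^2) = Real.exp (-u^2/2) ^ 2 := by
    rw [← Real.exp_nat_mul]; congr 1; push_cast; ring
  have hg : ∫ v : ℝ, Real.exp (-(1/2) * v^2) = √2 * √π := by
    rw [integral_gaussian, ← Real.sqrt_mul (by norm_num)]; congr 1; ring
  refine (integral_add j0 j1).trans ?_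
  rw [integral_const_mul, integral_const_mul]
  erw [integral_sub (((k3.sub k1).sub k4).add k2) k0, integral_add ((k3.sub k1).sub k4) k2,
    integral_sub (k3.sub k1) k4, integral_sub k3 k1]
  simp only [integral_const_mul, aux0, aux1, aux2, aux3, aux4, hg, e, hu]
  have q2 : √2 ^ 2 = 2 := Real.sq_sqrt (by norm_num)
  have qp : √π ^ 2 = π := Real.sq_sqrt hpi.le
  have r2 : √2 ≠ 0 := by positivity
  have rp : √π ≠ 0 := by positivity
  have : (2*π)⁻¹ = (√2^2 * √π^2)⁻¹ := by rw [q2, qp]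
  rw [this]
  generalize √π = p at *
  field_simp
  linear_combination (32 * p * rexp (-(u ^ 2 / 2)) * η * sin (4 * θ) * (u ^ 2 * (u ^ 2 * 4 - 12) + 3)) * q2

theorem stmt_15 (η : ℝ) (hη : |η| ≤ Real.exp 2 / 4)
    (μ : Measure (ℝ × ℝ)) (hμ : μ = volume.withDensity (fun x => ENNReal.ofReal (fEta η x)))
    (θ : ℝ) :
    Measure.map (fun x : ℝ × ℝ => x.1 * Real.sin θ + x.2 * Real.cos θ) μ
      = volume.withDensity (fun x : ℝ =>
          ENNReal.ofReal ((2*π)^(-(1:ℝ)/2) * Real.exp (-x^2/2) *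
            (1 - (Real.sqrt 2 * η * Real.sin (4*θ) / 32) * (4*x^4 - 12*x^2 + 3) *
              Real.exp (-x^2/2)))) := by
  subst hμ
  have hm : Measurable (fun x : ℝ × ℝ => x.1 * Real.sin θ + x.2 * Real.cos θ) := by fun_prop
  have hf : Measurable (fun x => ENNReal.ofReal (fEta η x)) := by
    unfold fEta; fun_prop
  ext A hA
  rw [Measure.map_apply hm hA, withDensity_apply _ (hm hA), withDensity_apply _ hA,
    ← (aT_mp θ).setLIntegral_comp_preimage_emb (aT_emb θ)]
  have hpre : aT θ ⁻¹' ((fun x : ℝ × ℝ => x.1 * Real.sin θ + x.2 * Real.cos θ) ⁻¹' A)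
      = A ×ˢ Set.univ := by
    ext x
    have h : (aT θ (aT θ x)).1 = x.1 := by
      rw [← LinearMap.comp_apply, aT_invol]; rfl
    have h' : (aT θ x).1 * Real.sin θ + (aT θ x).2 * Real.cos θ = x.1 := h
    simp [h']
  rw [hpre, Measure.volume_eq_prod, ← Measure.prod_restrict, Measure.restrict_univ]
  refine (lintegral_prod _ (hf.comp (aT_mp θ).measurable).aemeasurable).trans ?_
  refine lintegral_congr fun u => ?_
  simp only [Function.comp]
  rw [← (key η θ u).2, ofReal_integral_eq_lintegral_ofReal (key η θ u).1
    (Filter.Eventually.of_forall fun v => fEta_nonneg η hη _)]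
end

section
/- Let μ be a probability measure on ℝⁿ (n ≥ 2) and let S₁, S₂ be two distinct (n−1)-dimensional linear subspaces of ℝⁿ such that the orthogonal projection of μ onto S₁ is Gaussian and the orthogonal projection of μ onto S₂ is Gaussian. Then μ has finite exponential moments in every direction: for every s ∈ ℝⁿ, ∫_{ℝⁿ} e^{sᵀx} μ(dx) < ∞. Consequently the Laplace transform μ̂(z) = ∫ exp(z₁x₁ + ... + zₙxₙ) μ(dx) is well-defined for all z ∈ ℂⁿ and is an entire function of each complex variable z_j. -/
open MeasureTheory ProbabilityTheory

/-- If the orthogonal projections of a probability measure μ on ℝⁿ onto two distinct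
(n−1)-dimensional subspaces are Gaussian (every linear functional coming from the subspace
is normally distributed, possibly degenerately), then μ has finite exponential moments in
every direction. -/
theorem stmt_17 (n : ℕ) (hn : 2 ≤ n) (μ : Measure (Fin n → ℝ)) [IsProbabilityMeasure μ]
    (S₁ S₂ : Submodule ℝ (Fin n → ℝ))
    (hS₁ : Module.finrank ℝ S₁ = n - 1) (hS₂ : Module.finrank ℝ S₂ = n - 1)
    (hne : S₁ ≠ S₂)
    (hG₁ : ∀ a ∈ S₁, ∃ (m : ℝ) (v : NNReal),
      Measure.map (fun x => ∑ i, a i * x i) μ = gaussianReal m v)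
    (hG₂ : ∀ a ∈ S₂, ∃ (m : ℝ) (v : NNReal),
      Measure.map (fun x => ∑ i, a i * x i) μ = gaussianReal m v) :
    ∀ s : Fin n → ℝ, Integrable (fun x => Real.exp (∑ i, s i * x i)) μ := by
  have key : ∀ a : Fin n → ℝ, (∃ (m : ℝ) (v : NNReal),
      Measure.map (fun x => ∑ i, a i * x i) μ = gaussianReal m v) →
      Integrable (fun x => Real.exp (2 * ∑ i, a i * x i)) μ := by
    rintro a ⟨m, v, h⟩
    have hi := integrable_exp_mul_gaussianReal (μ := m) (v := v) 2
    rw [← h] at hi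
    have hm : Measurable (fun x : Fin n → ℝ => ∑ i, a i * x i) := by fun_prop
    exact hi.comp_measurable hm
  have htop : S₁ ⊔ S₂ = ⊤ := by
    apply Submodule.eq_top_of_finrank_eq
    have hlt : S₁ < S₁ ⊔ S₂ := by
      refine lt_of_le_of_ne le_sup_left fun h => hne ?_
      have hle : S₂ ≤ S₁ := by rw [h]; exact le_sup_right
      exact (Submodule.eq_of_le_of_finrank_eq hle (hS₂.trans hS₁.symm)).symm
    have h1 := Submodule.finrank_lt_finrank_of_lt hlt
    have h2 := Submodule.finrank_le (S₁ ⊔ S₂)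
    have h3 : Module.finrank ℝ (Fin n → ℝ) = n := by simp
    omega
  intro s
  have hs : s ∈ S₁ ⊔ S₂ := by rw [htop]; trivial
  obtain ⟨a, ha, b, hb, rfl⟩ := Submodule.mem_sup.1 hs
  refine ((key a (hG₁ a ha)).add (key b (hG₂ b hb))).mono' ?_ ?_
  · exact Measurable.aestronglyMeasurable (by fun_prop)
  · refine Filter.Eventually.of_forall fun x => ?_
    have e : ∑ i, (a + b) i * x i = ∑ i, a i * x i + ∑ i, b i * x i := by
      simp [add_mul, Finset.sum_add_distrib]
    simp only [Real.norm_eq_abs, Real.abs_exp, Pi.add_apply] at e ⊢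
    rw [e, Real.exp_add, two_mul, two_mul, Real.exp_add, Real.exp_add]
    nlinarith [sq_nonneg (Real.exp (∑ i, a i * x i) - Real.exp (∑ i, b i * x i)),
      Real.exp_pos (∑ i, a i * x i), Real.exp_pos (∑ i, b i * x i),
      mul_pos (Real.exp_pos (∑ i, a i * x i)) (Real.exp_pos (∑ i, b i * x i))]
end

section
/- Let {S_j, j = 1, 2, ...} be a countably infinite set of pairwise distinct (n−1)-dimensional linear subspaces of ℝⁿ (n ≥ 2), and let μ be a probability measure on ℝⁿ whose orthogonal projection onto S_j is Gaussian for every j. Then μ is Gaussian: there exist a mean vector m ∈ ℝⁿ and a positive semidefinite matrix Σ such that the characteristic function of μ is t ↦ exp(i mᵀt − tᵀΣt/2); equivalently, for every a ∈ ℝⁿ the pushforward of μ under x ↦ aᵀx is a (possibly degenerate) normal distribution. -/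
open MeasureTheory ProbabilityTheory

namespace S18
set_option linter.unusedSectionVars false
open Polynomial

/-- derivative polynomials of exp(m s + v s^2/2) -/
noncomputable def P {R : Type} [CommRing R] (m v : R) : ℕ → R[X]
  | 0 => 1
  | k + 1 => derivative (P m v k) + (C m + C v * X) * P m v k

lemma P_map {R R' : Type} [CommRing R] [CommRing R'] (f : R →+* R') (m v : R) (k : ℕ) :
    (P m v k).map f = P (f m) (f v) k := by
  induction k with
  | zero => simp [P]
  | succ k ih => simp [P, ih, ← derivative_map]

lemma iter (m v : ℝ) (k : ℕ) :
    iteratedDeriv k (fun s : ℝ => Real.exp (m * s + v * s ^ 2 / 2))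
      = fun s => (P m v k).eval s * Real.exp (m * s + v * s ^ 2 / 2) := by
  induction k with
  | zero => simp [P]
  | succ k ih =>
    rw [iteratedDeriv_succ, ih]
    funext s
    have h1 : HasDerivAt (fun s : ℝ => m * s + v * s ^ 2 / 2) (m + v * s) s := by
      have := ((hasDerivAt_id s).const_mul m).add
        ((((hasDerivAt_id s).pow 2).const_mul v).div_const 2)
      convert! this using 1
      simp; ring
    have := ((P m v k).hasDerivAt s).fun_mul h1.exp
    rw [HasDerivAt.deriv this]
    simp [P]; ring

variable {Ω : Type*} [MeasurableSpace Ω] {μ : Measure Ω} [IsProbabilityMeasure μ]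

lemma gauss_params {X : Ω → ℝ} (hX : Measurable X) {m : ℝ} {v : NNReal}
    (h : μ.map X = gaussianReal m v) : m = ∫ x, X x ∂μ ∧ (v : ℝ) = Var[X; μ] := by
  constructor
  · rw [← integral_id_gaussianReal (μ := m) (v := v), ← h,
      integral_map hX.aemeasurable (by fun_prop)]
  · rw [← variance_id_gaussianReal (μ := m) (v := v), ← h, variance_map (by fun_prop) hX.aemeasurable]
    rfl

lemma expSet_add {X Y : Ω → ℝ} (hX : integrableExpSet X μ = Set.univ)
    (hY : integrableExpSet Y μ = Set.univ) (mX : Measurable X) (mY : Measurable Y) :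
    integrableExpSet (fun x => X x + Y x) μ = Set.univ := by
  refine Set.eq_univ_of_forall fun t => ?_
  have key : ∀ Z : Ω → ℝ, integrableExpSet Z μ = Set.univ → Measurable Z →
      MemLp (fun x => Real.exp (t * Z x)) 2 μ := by
    intro Z hZ mZ
    rw [memLp_two_iff_integrable_sq (by fun_prop)]
    have : (2 * t) ∈ integrableExpSet Z μ := by rw [hZ]; trivial
    refine Integrable.congr this (Filter.Eventually.of_forall fun x => ?_)
    simp only []
    rw [← Real.exp_nat_mul]; congr 1; push_cast; ring
  have := (key X hX mX).integrable_mul (key Y hY mY)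
  refine Integrable.congr this (Filter.Eventually.of_forall fun x => ?_)
  simp only [Pi.mul_apply]
  rw [← Real.exp_add]; congr 1; ring

lemma int_pow_mul {X Y : Ω → ℝ} (hX : integrableExpSet X μ = Set.univ)
    (hY : integrableExpSet Y μ = Set.univ) (mX : Measurable X) (mY : Measurable Y) (i j : ℕ) :
    Integrable (fun x => X x ^ i * Y x ^ j) μ := by
  have key : ∀ (Z : Ω → ℝ) (i : ℕ), integrableExpSet Z μ = Set.univ → Measurable Z →
      MemLp (fun x => Z x ^ i) 2 μ := by
    intro Z i hZ mZ
    rw [memLp_two_iff_integrable_sq (by fun_prop)]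
    simp_rw [← pow_mul]
    exact integrable_pow_of_mem_interior_integrableExpSet (by simp [hZ]) _
  exact (key X i hX mX).integrable_mul (key Y j hY mY)

lemma memLp2 {X : Ω → ℝ} (hX : integrableExpSet X μ = Set.univ) : MemLp X 2 μ := by
  simpa using memLp_of_mem_interior_integrableExpSet (X := X) (μ := μ) (by simp [hX]) 2

lemma moment_poly {X Y : Ω → ℝ} (hX : integrableExpSet X μ = Set.univ)
    (hY : integrableExpSet Y μ = Set.univ) (mX : Measurable X) (mY : Measurable Y) (k : ℕ) :
    ∃ p : ℝ[X], ∀ t, p.eval t = ∫ x, (X x + t * Y x) ^ k ∂μ := by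
  refine ⟨∑ l ∈ Finset.range (k + 1),
    C ((k.choose l : ℝ) * ∫ x, X x ^ l * Y x ^ (k - l) ∂μ) * Polynomial.X ^ (k - l), fun t => ?_⟩
  simp_rw [add_pow]
  rw [integral_finsetSum]
  · simp only [eval_finsetSum, eval_mul, eval_C, eval_pow, eval_X]
    refine Finset.sum_congr rfl fun l _ => ?_
    rw [mul_assoc, mul_comm (∫ x, _ ∂μ), ← mul_assoc, ← integral_const_mul]
    congr 1; funext x; rw [mul_pow]; ring
  · intro l _
    refine ((int_pow_mul hX hY mX mY l (k - l)).const_mul (t ^ (k-l) * k.choose l)).congr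
      (Filter.Eventually.of_forall fun x => ?_)
    simp only []
    rw [mul_pow]; ring

lemma core {X Y : Ω → ℝ} (hX : integrableExpSet X μ = Set.univ)
    (hY : integrableExpSet Y μ = Set.univ) (mX : Measurable X) (mY : Measurable Y)
    (hE : ∀ t : ℝ, integrableExpSet (fun x => X x + t * Y x) μ = Set.univ)
    (T : Set ℝ) (hT : T.Infinite)
    (hG : ∀ t ∈ T, ∃ (m : ℝ) (v : NNReal), μ.map (fun x => X x + t * Y x) = gaussianReal m v) :
    ∃ (m : ℝ) (v : NNReal), μ.map X = gaussianReal m v := by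
  have lX := memLp2 hX
  have lY := memLp2 hY
  let M : ℝ[X] := C (∫ x, X x ∂μ) + C (∫ x, Y x ∂μ) * Polynomial.X
  let V : ℝ[X] := C Var[X; μ] + C (2 * cov[X, Y; μ]) * Polynomial.X
    + C Var[Y; μ] * Polynomial.X ^ 2
  have hM : ∀ t, M.eval t = ∫ x, (X x + t * Y x) ∂μ := by
    intro t
    rw [integral_add (lX.integrable (by norm_num)) ((lY.integrable (by norm_num)).const_mul _),
      integral_const_mul]
    simp [M]; ring
  have hV : ∀ t, V.eval t = Var[fun x => X x + t * Y x; μ] := by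
    intro t
    rw [variance_fun_add lX (lY.const_mul t), variance_const_mul, covariance_const_mul_right]
    simp [V]; ring
  have hmom : ∀ t k, (∃ (m : ℝ) (v : NNReal), μ.map (fun x => X x + t * Y x) = gaussianReal m v) →
      ∫ x, (X x + t * Y x) ^ k ∂μ = (P (M.eval t) (V.eval t) k).eval 0 := by
    rintro t k ⟨m, v, h⟩
    obtain ⟨h1, h2⟩ := gauss_params (by fun_prop) h
    rw [hM, hV, ← h1, ← h2]
    have e := iteratedDeriv_mgf_zero (X := fun x => X x + t * Y x) (μ := μ) (by simp [hE]) k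
    have e2 : mgf (fun x => X x + t * Y x) μ = fun s => Real.exp (m * s + v * s ^ 2 / 2) := by
      funext s; exact mgf_gaussianReal h s
    rw [e2, iter] at e
    simpa using e.symm
  have hall : ∀ k, ∫ x, X x ^ k ∂μ = (P (M.eval 0) (V.eval 0) k).eval 0 := by
    intro k
    obtain ⟨p, hp⟩ := moment_poly hX hY mX mY k
    have hq : ∀ t, ((P M V k).eval 0).eval t = (P (M.eval t) (V.eval t) k).eval 0 := by
      intro t
      have := P_map (evalRingHom t) M V k
      simp only [coe_evalRingHom] at this
      rw [← this, ← coe_evalRingHom, ← (evalRingHom t).map_zero, eval_map_apply]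
    have : p = (P M V k).eval 0 := by
      apply eq_of_infinite_eval_eq
      refine hT.mono fun t ht => ?_
      simp only [Set.mem_ofPred_eq]
      rw [hp, hq, hmom t k (hG t ht)]
    have h0 := hp 0
    rw [this, hq] at h0
    simpa using h0.symm
  have hv0 : V.eval 0 = Var[X; μ] := by simp [V]
  let v : NNReal := ⟨V.eval 0, by rw [hv0]; exact variance_nonneg _ _⟩
  refine ⟨M.eval 0, v, ?_⟩
  have hmgf : mgf X μ = mgf id (gaussianReal (M.eval 0) v) := by
    have e2 : mgf id (gaussianReal (M.eval 0) v)
        = fun s => Real.exp (M.eval 0 * s + V.eval 0 * s ^ 2 / 2) := by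
      funext s; exact mgf_gaussianReal Measure.map_id s
    rw [e2]
    have a1 : AnalyticOnNhd ℝ (mgf X μ) Set.univ := by
      have := analyticOnNhd_mgf (X := X) (μ := μ)
      simpa [hX] using this
    have a2 : AnalyticOnNhd ℝ (fun s => Real.exp (M.eval 0 * s + V.eval 0 * s ^ 2 / 2))
        Set.univ := by
      intro x _; fun_prop
    refine a1.eq_of_eventuallyEq a2 (z₀ := 0) ?_
    have a3 := (a1 0 trivial).sub (a2 0 trivial)
    have : analyticOrderAt (mgf X μ - fun s => Real.exp (M.eval 0 * s + V.eval 0 * s ^ 2 / 2)) 0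
        = ⊤ := by
      refine ENat.eq_top_iff_forall_ge.2 fun n => ?_
      rw [natCast_le_analyticOrderAt_iff_iteratedDeriv_eq_zero a3]
      intro i _
      rw [iteratedDeriv_sub (a1 0 trivial).contDiffAt (a2 0 trivial).contDiffAt,
        iteratedDeriv_mgf_zero (by simp [hX]), iter]
      have := hall i
      simp [this]
    rw [analyticOrderAt_eq_top] at this
    filter_upwards [this] with z hz
    simpa [sub_eq_zero] using hz
  have := Measure.ext_of_complexMGF_eq (X := X) (Y := id) (μ := μ)
    (μ' := gaussianReal (M.eval 0) v) mX.aemeasurable (by fun_prop) (by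
      funext z
      exact eqOn_complexMGF_of_mgf hmgf (by simp [hX]))
  simpa using this

lemma exists_b {n : ℕ} (S : ℕ → Submodule ℝ (Fin n → ℝ))
    (hdim : ∀ j, Module.finrank ℝ (S j) = n - 1)
    (hdist : ∀ j i, j ≠ i → S j ≠ S i) (a : Fin n → ℝ) (ha : ∀ j, a ∉ S j) :
    ∃ (b : Fin n → ℝ) (t : ℕ → ℝ), Function.Injective t ∧ ∀ j, a + t j • b ∈ S j := by
  have hf : ∀ j, ∃ f : (Fin n → ℝ) →ₗ[ℝ] ℝ, f a = 1 ∧ S j = LinearMap.ker f := by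
    intro j
    obtain ⟨f, hfa, hfS⟩ := Submodule.exists_le_ker_of_notMem (ha j)
    refine ⟨(f a)⁻¹ • f, by simp [hfa], ?_⟩
    rw [LinearMap.ker_smul _ _ (inv_ne_zero hfa)]
    refine Submodule.eq_of_le_of_finrank_le hfS ?_
    have h1 := f.finrank_range_add_finrank_ker
    have h2 : LinearMap.range f = ⊤ := LinearMap.range_eq_top.2
      (LinearMap.surjective (fun h => hfa (by simp [h])))
    rw [h2, finrank_top, Module.finrank_self, Module.finrank_fin_fun] at h1
    rw [hdim]; omega
  choose f hfa hfS using hf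
  have av : ∀ g : (Fin n → ℝ) →ₗ[ℝ] ℝ, g ≠ 0 → ∀ᵐ b : Fin n → ℝ, g b ≠ 0 := by
    intro g hg
    have := Measure.addHaar_submodule (volume : Measure (Fin n → ℝ)) (LinearMap.ker g)
      (fun h => hg (LinearMap.ker_eq_top.1 h))
    rw [ae_iff]
    convert this using 2
    ext; simp
  have h1 : ∀ᵐ b : Fin n → ℝ, ∀ j, f j b ≠ 0 :=
    ae_all_iff.2 fun j => av _ (fun h => by simpa [h] using hfa j)
  have h2 : ∀ᵐ b : Fin n → ℝ, ∀ j i, j ≠ i → (f j - f i) b ≠ 0 := by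
    refine ae_all_iff.2 fun j => ae_all_iff.2 fun i => ?_
    by_cases hji : j = i
    · simp [hji]
    · filter_upwards [av (f j - f i) (fun h => hdist j i hji (by
        rw [hfS j, hfS i, sub_eq_zero.1 h]))] with b hb _
      exact hb
  obtain ⟨b, hb1, hb2⟩ := (h1.and h2).exists
  refine ⟨b, fun j => - (f j b)⁻¹, ?_, ?_⟩
  · intro j i hji
    by_contra hne
    apply hb2 j i hne
    simpa [sub_eq_zero] using hji
  · intro j
    rw [hfS]
    simp [hfa, hb1 j]

end S18

/-- If the orthogonal projection of a probability measure μ on ℝⁿ onto each of countably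
infinitely many pairwise distinct (n−1)-dimensional subspaces is Gaussian, then μ is
Gaussian: its characteristic function is t ↦ exp(i mᵀt − tᵀΣt/2) for some mean m and
positive semidefinite Σ; equivalently every linear functional of μ is (possibly
degenerately) normally distributed. -/
theorem stmt_18 (n : ℕ) (hn : 2 ≤ n) (μ : Measure (Fin n → ℝ)) [IsProbabilityMeasure μ]
    (S : ℕ → Submodule ℝ (Fin n → ℝ))
    (hdim : ∀ j, Module.finrank ℝ (S j) = n - 1)
    (hdist : ∀ j i, j ≠ i → S j ≠ S i)
    (hG : ∀ j, ∀ a ∈ S j, ∃ (m : ℝ) (v : NNReal),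
      Measure.map (fun x => ∑ i, a i * x i) μ = gaussianReal m v) :
    (∃ (m : Fin n → ℝ) (Sig : Matrix (Fin n) (Fin n) ℝ), Sig.PosSemidef ∧
      ∀ t : Fin n → ℝ,
        (∫ x, Complex.exp (Complex.I * ((∑ i, t i * x i : ℝ) : ℂ)) ∂μ)
          = Complex.exp (Complex.I * ((∑ i, m i * t i : ℝ) : ℂ)
              - ((∑ i, ∑ j, t i * Sig i j * t j : ℝ) : ℂ) / 2)) ∧
    ∀ a : Fin n → ℝ, ∃ (m : ℝ) (v : NNReal),
      Measure.map (fun x => ∑ i, a i * x i) μ = gaussianReal m v := by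
  have meas : ∀ a : Fin n → ℝ, Measurable (fun x : Fin n → ℝ => ∑ i, a i * x i) := by
    intro a; fun_prop
  have hlin : ∀ (a b : Fin n → ℝ) (t : ℝ) (x : Fin n → ℝ),
      ∑ i, (a + t • b) i * x i = ∑ i, a i * x i + t * ∑ i, b i * x i := by
    intro a b t x
    rw [Finset.mul_sum, ← Finset.sum_add_distrib]
    refine Finset.sum_congr rfl fun i _ => ?_
    simp; ring
  have hsup : S 0 ⊔ S 1 = ⊤ := by
    apply Submodule.eq_top_of_finrank_eq
    have h1 : S 0 < S 0 ⊔ S 1 := by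
      refine lt_of_le_of_ne le_sup_left fun h => ?_
      have : S 1 ≤ S 0 := by rw [h]; exact le_sup_right
      exact hdist 1 0 (by norm_num)
        (Submodule.eq_of_le_of_finrank_le this (by rw [hdim, hdim]))
    have h2 := Submodule.finrank_lt_finrank_of_lt h1
    have h3 := Submodule.finrank_le (S 0 ⊔ S 1)
    rw [hdim] at h2
    rw [Module.finrank_fin_fun] at h3 ⊢
    omega
  have hES : ∀ j, ∀ a ∈ S j, integrableExpSet (fun x => ∑ i, a i * x i) μ = Set.univ := by
    intro j a ha
    obtain ⟨m, v, h⟩ := hG j a ha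
    refine Set.eq_univ_of_forall fun t => ?_
    have := integrable_exp_mul_gaussianReal (μ := m) (v := v) t
    rw [← h, integrable_map_measure (by fun_prop) (meas a).aemeasurable] at this
    exact this
  have hE : ∀ a : Fin n → ℝ, integrableExpSet (fun x => ∑ i, a i * x i) μ = Set.univ := by
    intro a
    have : a ∈ S 0 ⊔ S 1 := by rw [hsup]; trivial
    obtain ⟨u, hu, w, hw, rfl⟩ := Submodule.mem_sup.1 this
    have := S18.expSet_add (hES 0 u hu) (hES 1 w hw) (meas u) (meas w)
    rw [← this]
    congr 1; funext x
    simpa using hlin u w 1 x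
  have hall : ∀ a : Fin n → ℝ, ∃ (m : ℝ) (v : NNReal),
      Measure.map (fun x => ∑ i, a i * x i) μ = gaussianReal m v := by
    intro a
    by_cases ha : ∃ j, a ∈ S j
    · obtain ⟨j, hj⟩ := ha
      exact hG j a hj
    · push Not at ha
      obtain ⟨b, t, ht, hb⟩ := S18.exists_b S hdim hdist a ha
      refine S18.core (hE a) (hE b) (meas a) (meas b) (fun t => ?_) (Set.range t)
        (Set.infinite_range_of_injective ht) ?_
      · simpa only [hlin] using hE (a + t • b)
      · rintro _ ⟨j, rfl⟩
        simpa only [hlin] using hG j _ (hb j)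
  refine ⟨⟨fun i => ∫ x, x i ∂μ, Matrix.of fun i j => cov[fun x => x i, fun x => x j; μ], ?_, ?_⟩,
    hall⟩
  all_goals
    have hL : ∀ i, MemLp (fun x : Fin n → ℝ => x i) 2 μ := by
      intro i
      have := S18.memLp2 (hE (Pi.single i 1))
      simpa [Pi.single_apply] using this
    have hVar : ∀ t : Fin n → ℝ, Var[fun x => ∑ i, t i * x i; μ]
        = ∑ i, ∑ j, t i * cov[fun x => x i, fun x => x j; μ] * t j := by
      intro t
      rw [variance_fun_sum (fun i => (hL i).const_mul (t i))]
      refine Finset.sum_congr rfl fun i _ => Finset.sum_congr rfl fun j _ => ?_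
      rw [covariance_const_mul_left, covariance_const_mul_right]; ring
  · refine Matrix.PosSemidef.of_dotProduct_mulVec_nonneg ?_ ?_
    · ext i j
      simp [covariance_comm]
    · intro t
      have := variance_nonneg (fun x : Fin n → ℝ => ∑ i, t i * x i) μ
      rw [hVar] at this
      refine this.trans_eq ?_
      simp only [dotProduct, Matrix.mulVec, Finset.mul_sum]
      simp [mul_assoc]
  · intro t
    obtain ⟨m, v, h⟩ := hall t
    obtain ⟨h1, h2⟩ := S18.gauss_params (meas t) h
    have hc := charFun_gaussianReal (μ := m) (v := v) 1
    rw [← h, charFun_apply_real, integral_map (meas t).aemeasurable (by fun_prop)] at hc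
    have hm : m = ∑ i, (∫ x, x i ∂μ) * t i := by
      rw [h1, integral_finsetSum _ fun i _ => ((hL i).integrable (by norm_num)).const_mul _]
      refine Finset.sum_congr rfl fun i _ => ?_
      rw [integral_const_mul, mul_comm]
    have hv : (v : ℝ) = ∑ i, ∑ j, t i * cov[fun x => x i, fun x => x j; μ] * t j := by
      rw [h2, hVar]
    simp only [Matrix.of_apply]
    rw [← hm, ← hv]
    convert hc using 2
    · funext x; congr 1; push_cast; ring
    · push_cast; ring
end
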